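/- For all integers m ≥ 2 and n ≥ 1, χ_la(C_{2m} ∨ O_{2n−1}) = 3. -/

import Mathlib

open Finset SimpleGraph
open scoped Classical

/-- The induced vertex label (weight) of `x`: the sum of `f` over all edges incident to `x`. -/
noncomputable def vertexWeight {V : Type*} [Fintype V] (G : SimpleGraph V)
    (f : Sym2 V → ℕ) (x : V) : ℕ :=
  ∑ e ∈ G.edgeFinset.filter (fun e => x ∈ e), f e

/-- `f` is a local antimagic labeling of `G`: it restricts to a bijection from the edge set of
`G` onto `{1, …, q}` (where `q` is the number of edges), and adjacent vertices get distinct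
induced vertex labels. -/
def IsLocalAntimagic {V : Type*} [Fintype V] (G : SimpleGraph V) (f : Sym2 V → ℕ) : Prop :=
  Set.BijOn f G.edgeSet (Set.Icc 1 G.edgeSet.ncard) ∧
  ∀ ⦃x y : V⦄, G.Adj x y → vertexWeight G f x ≠ vertexWeight G f y

/-- The number of distinct induced vertex labels, `c(f)`. -/
noncomputable def colorCount {V : Type*} [Fintype V] (G : SimpleGraph V)
    (f : Sym2 V → ℕ) : ℕ :=
  (Finset.univ.image (vertexWeight G f)).card

/-- The local antimagic chromatic number `χ_la(G)`. -/
noncomputable def chiLA {V : Type*} [Fintype V] (G : SimpleGraph V) : ℕ :=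
  sInf { n | ∃ f : Sym2 V → ℕ, IsLocalAntimagic G f ∧ colorCount G f = n }

/-- The join `G ∨ H` of two vertex-disjoint graphs. -/
def joinG {α β : Type*} (G : SimpleGraph α) (H : SimpleGraph β) : SimpleGraph (α ⊕ β) :=
  SimpleGraph.fromRel (fun x y =>
    (∃ a b, x = Sum.inl a ∧ y = Sum.inl b ∧ G.Adj a b) ∨
    (∃ a b, x = Sum.inr a ∧ y = Sum.inr b ∧ H.Adj a b) ∨
    (∃ a b, x = Sum.inl a ∧ y = Sum.inr b))

/-! Recentering the labels `1, …, q` to the integers `1 - q, 3 - q, …, q - 1` makes the possible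
sums symmetric about `0`. Two neighbours on the rim `C_N` and a hub of `O_k` form a triangle, so it
suffices to find a labeling whose sums are `w` and `-w` alternately around the rim and `0` at the
hubs. Such a labeling extends to two further hubs: their spokes get the `2 N` new labels, in pairs
of opposite labels at each hub, which moves the two rim sums apart by adding `2` to one and `-2` to
the other. Since the number of hubs is odd, the wheel `C_N ∨ O_1` serves as the start, with an
explicit labeling of its rim that forces the labels of the spokes. The wheel `C_4 ∨ O_1` has no
such labeling: it is labeled by hand, and for `N = 4` the extension starts from three hubs. -/

section LocalAntimagic

variable {V : Type*} [Fintype V] {G : SimpleGraph V} {f : Sym2 V → ℕ}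

lemma IsLocalAntimagic.card_le_colorCount (hf : IsLocalAntimagic G f) {s : Finset V}
    (hs : G.IsClique s) : s.card ≤ colorCount G f := by
  have hinj : Set.InjOn (vertexWeight G f) s := fun u hu v hv huv ↦
    by_contra fun hne ↦ hf.2 (hs hu hv hne) huv
  rw [← card_image_of_injOn hinj]
  exact card_le_card (image_subset_image s.subset_univ)

lemma IsLocalAntimagic.chiLA_eq_of_isNClique (hf : IsLocalAntimagic G f) {c : ℕ} {s : Finset V}
    (hs : G.IsNClique c s) (hc : colorCount G f ≤ c) : chiLA G = c := by
  have hmem : colorCount G f ∈ {n | ∃ g, IsLocalAntimagic G g ∧ colorCount G g = n} :=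
    ⟨f, hf, rfl⟩
  refine le_antisymm ((Nat.sInf_le hmem).trans hc) ?_
  obtain ⟨g, hg, hgc⟩ := Nat.sInf_mem ⟨_, hmem⟩
  rw [chiLA, ← hgc, ← hs.card_eq]
  exact hg.card_le_colorCount hs.isClique

end LocalAntimagic

section IsCentered

/-- `y` labels a set of `q` edges bijectively by the `q` integers `1 - q, 3 - q, …, q - 1`. These
are the values `2 ℓ - (q + 1)` for `ℓ = 1, …, q`, so `y` stands for a bijective labeling by
`1, …, q`, recentered to be symmetric about `0`. Surjectivity is left out, being a consequence of
injectivity. -/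
structure IsCentered {ι : Type*} [Fintype ι] (y : ι → ℤ) : Prop where
  injective : Function.Injective y
  odd_add_card : ∀ e, Odd (y e + Fintype.card ι)
  abs_lt_card : ∀ e, |y e| < Fintype.card ι

/-- The labels in `1, …, q` that a centered labeling `y` of `q` edges stands for. -/
def uncenter {ι : Type*} [Fintype ι] (y : ι → ℤ) (e : ι) : ℕ :=
  ((y e + Fintype.card ι + 1) / 2).toNat

variable {ι ι' : Type*} [Fintype ι] [Fintype ι'] {y : ι → ℤ}

lemma IsCentered.two_mul_uncenter (hy : IsCentered y) (e : ι) :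
    2 * (uncenter y e : ℤ) = y e + Fintype.card ι + 1 := by
  have hodd := Int.odd_iff.mp (hy.odd_add_card e)
  have habs := abs_lt.mp (hy.abs_lt_card e)
  unfold uncenter
  omega

lemma IsCentered.bijOn_uncenter (hy : IsCentered y) :
    Set.BijOn (uncenter y) Set.univ (Set.Icc 1 (Fintype.card ι)) := by
  have hmaps : Set.MapsTo (uncenter y) (univ : Finset ι) (Icc 1 (Fintype.card ι)) := by
    intro e _
    have htwo := hy.two_mul_uncenter e
    have habs := abs_lt.mp (hy.abs_lt_card e)
    simp only [coe_Icc, Set.mem_Icc]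
    omega
  have hinj : Set.InjOn (uncenter y) (univ : Finset ι) := by
    intro e _ e' _ he
    have htwo := hy.two_mul_uncenter e
    have htwo' := hy.two_mul_uncenter e'
    exact hy.injective (by omega)
  have hsurj := surjOn_of_injOn_of_card_le _ hmaps hinj (by simp)
  simpa only [coe_univ, coe_Icc] using Set.BijOn.mk hmaps hinj hsurj

lemma IsCentered.sum_uncenter (hy : IsCentered y) :
    ∑ e, uncenter y e = ∑ l ∈ Icc 1 (Fintype.card ι), l := by
  obtain ⟨hmaps, hinj, hsurj⟩ := hy.bijOn_uncenter
  refine sum_nbij (uncenter y) (fun e _ ↦ ?_) ?_ ?_ fun _ _ ↦ rfl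
  · simpa using hmaps (Set.mem_univ e)
  · simpa using hinj
  · simpa using hsurj

lemma IsCentered.neg (hy : IsCentered y) : IsCentered (-y) where
  injective := neg_injective.comp hy.injective
  odd_add_card e := by
    have hodd := hy.odd_add_card e
    simp only [Pi.neg_apply, Int.odd_iff] at hodd ⊢
    omega
  abs_lt_card e := by simpa using hy.abs_lt_card e

/-- `y` and `-y` take the same set of values. -/
lemma IsCentered.sum_eq_zero (hy : IsCentered y) : ∑ e, y e = 0 := by
  have hsum : ∀ {z : ι → ℤ}, IsCentered z →
      ∑ e, z e =
        2 * ∑ l ∈ Icc 1 (Fintype.card ι), (l : ℤ) - Fintype.card ι * (Fintype.card ι + 1) := by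
    intro z hz
    have hlabel : ∀ e, z e = 2 * (uncenter z e : ℤ) - (Fintype.card ι + 1) := fun e ↦ by
      linarith [hz.two_mul_uncenter e]
    rw [sum_congr rfl fun e _ ↦ hlabel e, sum_sub_distrib, ← mul_sum, ← Nat.cast_sum,
      hz.sum_uncenter]
    simp
  have hneg : ∑ e, y e = ∑ e, (-y) e := (hsum hy).trans (hsum hy.neg).symm
  simp only [Pi.neg_apply, sum_neg_distrib] at hneg
  linarith

lemma IsCentered.comp_equiv (hy : IsCentered y) (σ : ι' ≃ ι) : IsCentered (y ∘ σ) where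
  injective := hy.injective.comp σ.injective
  odd_add_card e := Fintype.card_congr σ ▸ hy.odd_add_card (σ e)
  abs_lt_card e := Fintype.card_congr σ ▸ hy.abs_lt_card (σ e)

lemma IsCentered.sumElim (hy : IsCentered y) {z : ι' → ℤ} (hz : Function.Injective z)
    (hodd : ∀ e, Odd (z e + (Fintype.card ι + Fintype.card ι')))
    (hle : ∀ e, (Fintype.card ι : ℤ) ≤ |z e|)
    (hlt : ∀ e, |z e| < Fintype.card ι + Fintype.card ι') (heven : Even (Fintype.card ι')) :
    IsCentered (Sum.elim y z) where
  injective := hy.injective.sumElim hz fun e e' he ↦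
    (hle e').not_gt (he ▸ hy.abs_lt_card e)
  odd_add_card e := by
    rw [Fintype.card_sum, Nat.cast_add]
    rcases e with e | e
    · rw [← add_assoc]
      exact (hy.odd_add_card e).add_even (by exact_mod_cast heven)
    · exact hodd e
  abs_lt_card e := by
    rw [Fintype.card_sum, Nat.cast_add]
    rcases e with e | e
    · exact (hy.abs_lt_card e).trans_le (by simp)
    · exact hlt e

end IsCentered

section EdgeLabeling

variable {V ι : Type*} [Fintype ι] {G : SimpleGraph V}
  {ε : ι → Sym2 V} {y : ι → ℤ}

/-- The labeling that a centered labeling `y` stands for, on the edges enumerated by `ε`; its value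
is `0` off the range of `ε`. -/
noncomputable def edgeLabeling (ε : ι → Sym2 V) (y : ι → ℤ) : Sym2 V → ℕ :=
  Function.extend ε (uncenter y) 0

lemma IsCentered.bijOn_edgeLabeling (hy : IsCentered y) (hinj : Function.Injective ε)
    (hrange : Set.range ε = G.edgeSet) :
    Set.BijOn (edgeLabeling ε y) G.edgeSet (Set.Icc 1 G.edgeSet.ncard) := by
  have hcard : G.edgeSet.ncard = Fintype.card ι := by
    rw [← hrange, ← Set.image_univ, Set.ncard_image_of_injective _ hinj, Set.ncard_univ,
      Nat.card_eq_fintype_card]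
  have hcomp : edgeLabeling ε y ∘ ε = uncenter y := Function.extend_comp hinj _ _
  rw [hcard, ← hrange, ← Set.image_univ, ← Set.bijOn_comp_iff hinj.injOn, hcomp]
  exact hy.bijOn_uncenter

lemma IsCentered.two_mul_vertexWeight_edgeLabeling [Fintype V] [DecidableEq V] (hy : IsCentered y)
    (hinj : Function.Injective ε) (hrange : Set.range ε = G.edgeSet) (v : V) :
    2 * (vertexWeight G (edgeLabeling ε y) v : ℤ) =
      ∑ e with v ∈ ε e, (y e + (Fintype.card ι + 1)) := by
  have hedges : G.edgeFinset = univ.map ⟨ε, hinj⟩ := by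
    ext e
    simp [← hrange]
  have hweight : vertexWeight G (edgeLabeling ε y) v = ∑ e with v ∈ ε e, uncenter y e := by
    simp only [vertexWeight, hedges, sum_filter, sum_map, Function.Embedding.coeFn_mk,
      edgeLabeling, hinj.extend_apply]
  rw [hweight]
  push_cast
  simp only [mul_sum, hy.two_mul_uncenter, add_assoc]

end EdgeLabeling

section Join

variable {α β : Type*} {G : SimpleGraph α} {H : SimpleGraph β}

lemma joinG_adj_inl_inl {a b : α} : (joinG G H).Adj (Sum.inl a) (Sum.inl b) ↔ G.Adj a b := by
  simp only [joinG, fromRel_adj]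
  grind [G.adj_comm, SimpleGraph.Adj.ne]

lemma joinG_adj_inr_inr {a b : β} : (joinG G H).Adj (Sum.inr a) (Sum.inr b) ↔ H.Adj a b := by
  simp only [joinG, fromRel_adj]
  grind [H.adj_comm, SimpleGraph.Adj.ne]

lemma joinG_adj_inl_inr (a : α) (b : β) : (joinG G H).Adj (Sum.inl a) (Sum.inr b) := by
  simp [joinG]

end Join

section CycleGraph

variable {N : ℕ} [NeZero N]

lemma fin_val_add_one (j : Fin N) : (j + 1).val = if j.val = N - 1 then 0 else j.val + 1 := by
  obtain ⟨n, rfl⟩ := Nat.exists_eq_succ_of_ne_zero (NeZero.ne N)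
  simp [Fin.val_add_one, Fin.ext_iff]

lemma fin_val_sub_one (j : Fin N) : (j - 1).val = if j.val = 0 then N - 1 else j.val - 1 := by
  obtain ⟨n, rfl⟩ := Nat.exists_eq_succ_of_ne_zero (NeZero.ne N)
  simp only [Fin.coe_sub_one, Fin.val_eq_zero_iff, Nat.add_one_sub_one]

lemma even_fin_add_one_iff (hN : Even N) (j : Fin N) : Even (j + 1).val ↔ ¬ Even j.val := by
  have hj := j.isLt
  rw [fin_val_add_one]
  grind

lemma cycleGraph_adj_iff_eq_add_one (hN : 2 ≤ N) {u v : Fin N} :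
    (cycleGraph N).Adj u v ↔ u = v + 1 ∨ v = u + 1 := by
  obtain ⟨n, rfl⟩ := Nat.exists_eq_add_of_le' hN
  rw [cycleGraph_adj, sub_eq_iff_eq_add', sub_eq_iff_eq_add']

end CycleGraph

section JoinEdge

variable {N : ℕ} [NeZero N] {κ : Type*}

/-- The graph `C_N ∨ O_κ`. Its vertices `Sum.inl j` form the rim, its vertices `Sum.inr i` are the
hubs. -/
abbrev cycleJoinNull (N : ℕ) (κ : Type*) : SimpleGraph (Fin N ⊕ κ) :=
  joinG (cycleGraph N) (⊥ : SimpleGraph κ)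

lemma cycleJoinNull_adj_inl_add_one (hN : 2 ≤ N) (j : Fin N) :
    (cycleJoinNull N κ).Adj (Sum.inl j) (Sum.inl (j + 1)) :=
  joinG_adj_inl_inl.mpr ((cycleGraph_adj_iff_eq_add_one hN).mpr (Or.inr rfl))

/-- The edges of `C_N ∨ O_κ`, indexed: `Sum.inl j` is the edge of the rim `C_N` from `j` to `j + 1`,
and `Sum.inr (i, j)` is the spoke between the hub `i` of `O_κ` and the vertex `j` of the rim. -/
def joinEdge : Fin N ⊕ κ × Fin N → Sym2 (Fin N ⊕ κ)
  | Sum.inl j => s(Sum.inl j, Sum.inl (j + 1))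
  | Sum.inr (i, j) => s(Sum.inl j, Sum.inr i)

lemma inl_mem_joinEdge_inl {j l : Fin N} :
    Sum.inl j ∈ (joinEdge (Sum.inl l) : Sym2 (Fin N ⊕ κ)) ↔ l = j - 1 ∨ l = j := by
  simp [joinEdge, eq_sub_iff_add_eq, eq_comm, or_comm]

lemma joinEdge_injective (hN : 3 ≤ N) :
    Function.Injective (joinEdge : Fin N ⊕ κ × Fin N → Sym2 (Fin N ⊕ κ)) := by
  rintro (j | ⟨i, j⟩) (j' | ⟨i', j'⟩) h
  · have hj := fin_val_add_one j
    have hj' := fin_val_add_one j'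
    simp only [joinEdge, Sym2.eq_iff, Sum.inl.injEq, Fin.ext_iff] at h ⊢
    grind
  all_goals simp_all [joinEdge]

lemma range_joinEdge (hN : 2 ≤ N) :
    Set.range joinEdge = (cycleJoinNull N κ).edgeSet := by
  ext e
  induction e using Sym2.ind with | _ u v
  rw [mem_edgeSet, Set.mem_range]
  constructor
  · rintro ⟨j | ⟨i, j⟩, h⟩ <;> rw [← mem_edgeSet, ← h, joinEdge, mem_edgeSet]
    · exact cycleJoinNull_adj_inl_add_one hN j
    · exact joinG_adj_inl_inr j i
  · rcases u with u | u <;> rcases v with v | v <;> intro h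
    · rcases (cycleGraph_adj_iff_eq_add_one hN).mp (joinG_adj_inl_inl.mp h) with rfl | rfl
      · exact ⟨Sum.inl v, Sym2.eq_swap⟩
      · exact ⟨Sum.inl u, rfl⟩
    · exact ⟨Sum.inr (v, u), rfl⟩
    · exact ⟨Sum.inr (u, v), Sym2.eq_swap⟩
    · exact absurd (joinG_adj_inr_inr.mp h) not_false

variable [Fintype κ]

lemma sum_joinEdge_inl (hN : 2 ≤ N) {M : Type*} [AddCommMonoid M] (g : Fin N ⊕ κ × Fin N → M)
    (j : Fin N) : ∑ e with Sum.inl j ∈ joinEdge e, g e =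
      g (Sum.inl (j - 1)) + g (Sum.inl j) + ∑ i, g (Sum.inr (i, j)) := by
  have hne : j - 1 ≠ j := by
    rw [Ne, Fin.ext_iff, fin_val_sub_one]
    split_ifs <;> omega
  have hrim : ∑ l, (if l = j - 1 ∨ l = j then g (Sum.inl l) else 0) =
      g (Sum.inl (j - 1)) + g (Sum.inl j) := by
    rw [← sum_filter, filter_or, filter_eq', filter_eq']
    simp [sum_pair hne]
  rw [sum_filter, Fintype.sum_sum_type, Fintype.sum_prod_type]
  simp_rw [inl_mem_joinEdge_inl]
  rw [hrim]
  simp [joinEdge]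

lemma sum_joinEdge_inr {M : Type*} [AddCommMonoid M] (g : Fin N ⊕ κ × Fin N → M) (i : κ) :
    ∑ e with Sum.inr i ∈ joinEdge e, g e = ∑ j, g (Sum.inr (i, j)) := by
  rw [sum_filter, Fintype.sum_sum_type, Fintype.sum_prod_type]
  simp [joinEdge, sum_ite_irrel]

end JoinEdge

lemma card_fin_sum_prod_fin {N : ℕ} {κ : Type*} [Fintype κ] :
    Fintype.card (Fin N ⊕ κ × Fin N) = N * (Fintype.card κ + 1) := by
  simp only [Fintype.card_sum, Fintype.card_prod, Fintype.card_fin]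
  ring

section Alternating

variable {N : ℕ} [NeZero N] {κ : Type*} [Fintype κ] {x : Fin N → ℤ} {a : κ → Fin N → ℤ}
  {α β ρ w : ℤ}

/-- A centered labeling of `C_N ∨ O_κ`, with label `x j` on the rim edge from `j` to `j + 1` and
`a i j` on the spoke between the hub `i` and the rim vertex `j`, whose label sums are `ρ` at the
hubs and alternately `α` and `β` around the rim. -/
structure IsAlternatingLabeling (x : Fin N → ℤ) (a : κ → Fin N → ℤ) (α β ρ : ℤ) : Prop where
  isCentered : IsCentered (Sum.elim x a.uncurry)
  rim_sum : ∀ j, x (j - 1) + x j + ∑ i, a i j = if Even j.val then α else β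
  hub_sum : ∀ i, ∑ j, a i j = ρ

/-- The labeling of `C_N ∨ O_κ` that the centered labels `x` of the rim and `a` of the spokes
stand for. -/
noncomputable def joinLabeling (x : Fin N → ℤ) (a : κ → Fin N → ℤ) : Sym2 (Fin N ⊕ κ) → ℕ :=
  edgeLabeling joinEdge (Sum.elim x a.uncurry)

namespace IsAlternatingLabeling

lemma two_mul_vertexWeight_inl (h : IsAlternatingLabeling x a α β ρ) (hN : 3 ≤ N) (j : Fin N) :
    2 * (vertexWeight (cycleJoinNull N κ) (joinLabeling x a) (Sum.inl j) : ℤ) =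
      (if Even j.val then α else β) +
        (Fintype.card κ + 2) * (N * (Fintype.card κ + 1) + 1) := by
  rw [joinLabeling, h.isCentered.two_mul_vertexWeight_edgeLabeling (joinEdge_injective hN)
    (range_joinEdge (by omega)), sum_joinEdge_inl (by omega), ← h.rim_sum j]
  simp only [Sum.elim_inl, Sum.elim_inr, Function.uncurry, card_fin_sum_prod_fin, sum_add_distrib,
    sum_const, card_univ, nsmul_eq_mul]
  push_cast
  ring

lemma two_mul_vertexWeight_inr (h : IsAlternatingLabeling x a α β ρ) (hN : 3 ≤ N) (i : κ) :
    2 * (vertexWeight (cycleJoinNull N κ) (joinLabeling x a) (Sum.inr i) : ℤ) =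
      ρ + N * (N * (Fintype.card κ + 1) + 1) := by
  rw [joinLabeling, h.isCentered.two_mul_vertexWeight_edgeLabeling (joinEdge_injective hN)
    (range_joinEdge (by omega)), sum_joinEdge_inr, ← h.hub_sum i]
  simp only [Sum.elim_inr, Function.uncurry, card_fin_sum_prod_fin, sum_add_distrib, sum_const,
    card_univ, Fintype.card_fin, nsmul_eq_mul]
  push_cast
  ring

lemma isLocalAntimagic (h : IsAlternatingLabeling x a α β ρ) (hN : 3 ≤ N) (heven : Even N)
    (hαβ : α ≠ β)
    (hαρ : α + (Fintype.card κ + 2) * (N * (Fintype.card κ + 1) + 1) ≠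
      ρ + N * (N * (Fintype.card κ + 1) + 1))
    (hβρ : β + (Fintype.card κ + 2) * (N * (Fintype.card κ + 1) + 1) ≠
      ρ + N * (N * (Fintype.card κ + 1) + 1)) :
    IsLocalAntimagic (cycleJoinNull N κ) (joinLabeling x a) := by
  have hrim (j : Fin N) : vertexWeight (cycleJoinNull N κ) (joinLabeling x a) (Sum.inl (j + 1)) ≠
      vertexWeight (cycleJoinNull N κ) (joinLabeling x a) (Sum.inl j) := by
    intro heq
    have hj := h.two_mul_vertexWeight_inl hN j
    have hj' := h.two_mul_vertexWeight_inl hN (j + 1)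
    rw [heq] at hj'
    simp only [even_fin_add_one_iff heven] at hj'
    grind
  have hhub (j : Fin N) (i : κ) : vertexWeight (cycleJoinNull N κ) (joinLabeling x a) (Sum.inl j) ≠
      vertexWeight (cycleJoinNull N κ) (joinLabeling x a) (Sum.inr i) := by
    intro heq
    have hj := h.two_mul_vertexWeight_inl hN j
    rw [heq, h.two_mul_vertexWeight_inr hN i] at hj
    split_ifs at hj
    · exact hαρ hj.symm
    · exact hβρ hj.symm
  refine ⟨h.isCentered.bijOn_edgeLabeling (joinEdge_injective hN) (range_joinEdge (by omega)), ?_⟩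
  rintro (u | u) (v | v) huv
  · rcases (cycleGraph_adj_iff_eq_add_one (by omega)).mp (joinG_adj_inl_inl.mp huv) with rfl | rfl
    · exact hrim v
    · exact (hrim u).symm
  · exact hhub u v
  · exact (hhub v u).symm
  · exact absurd (joinG_adj_inr_inr.mp huv) not_false

lemma colorCount_le_three (h : IsAlternatingLabeling x a α β ρ) (hN : 3 ≤ N) :
    colorCount (cycleJoinNull N κ) (joinLabeling x a) ≤ 3 := by
  set c : ℤ := N * (Fintype.card κ + 1) + 1
  have hsub : (univ.image (vertexWeight (cycleJoinNull N κ) (joinLabeling x a))).image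
      (fun s : ℕ ↦ (2 * s : ℤ)) ⊆
        {α + (Fintype.card κ + 2) * c, β + (Fintype.card κ + 2) * c, ρ + N * c} := by
    simp only [image_image, image_subset_iff, mem_univ, forall_const, Sum.forall,
      Function.comp_apply, h.two_mul_vertexWeight_inl hN, h.two_mul_vertexWeight_inr hN]
    refine ⟨fun j ↦ ?_, fun _ ↦ ?_⟩
    · split_ifs <;> simp [c]
    · simp [c]
  rw [colorCount, ← card_image_of_injective (f := fun s : ℕ ↦ (2 * s : ℤ)) _ (fun s t hst ↦ by
    simpa using hst)]
  exact (card_le_card hsub).trans card_le_three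

/-- Two adjacent rim vertices and a hub form a triangle. -/
theorem chiLA_eq_three [Nonempty κ] (h : IsAlternatingLabeling x a α β ρ) (hN : 3 ≤ N)
    (hanti : IsLocalAntimagic (cycleJoinNull N κ) (joinLabeling x a)) :
    chiLA (cycleJoinNull N κ) = 3 := by
  obtain ⟨i⟩ := ‹Nonempty κ›
  have htriangle : (cycleJoinNull N κ).IsNClique 3 {Sum.inl 0, Sum.inl (0 + 1), Sum.inr i} :=
    is3Clique_triple_iff.mpr ⟨cycleJoinNull_adj_inl_add_one (by omega) 0,
      joinG_adj_inl_inr _ _, joinG_adj_inl_inr _ _⟩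
  exact hanti.chiLA_eq_of_isNClique htriangle (h.colorCount_le_three hN)

/-- With `q` edges the centered sums `±w` at a rim vertex and `0` at a hub belong to weights whose
doubles are `±w` and `0` modulo `q + 1`. -/
theorem chiLA_eq_three_of_balanced [Nonempty κ] (h : IsAlternatingLabeling x a w (-w) 0)
    (hN : 3 ≤ N) (heven : Even N) (hpos : 0 < w) (hle : w ≤ N * (Fintype.card κ + 1)) :
    chiLA (cycleJoinNull N κ) = 3 := by
  have hndvd : ¬ ((N * (Fintype.card κ + 1) + 1 : ℤ) ∣ w) := fun hdvd ↦ by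
    linarith [Int.le_of_dvd hpos hdvd]
  refine h.chiLA_eq_three hN (h.isLocalAntimagic hN heven (by omega)
    (fun heq ↦ hndvd ⟨N - (Fintype.card κ + 2), ?_⟩)
    (fun heq ↦ hndvd ⟨Fintype.card κ + 2 - N, ?_⟩))
  · linarith
  · linarith

end IsAlternatingLabeling

end Alternating

section PairedSpokes

variable {N : ℕ}

lemma sum_fin_eq_zero_of_pairs {M : Type*} [AddCommMonoid M] (hN : Even N) {g : ℕ → M}
    (hg : ∀ i, g (2 * i) + g (2 * i + 1) = 0) : ∑ j : Fin N, g j = 0 := by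
  obtain ⟨m, rfl⟩ := hN.two_dvd
  rw [Fin.sum_univ_eq_sum_range g]
  induction m with
  | zero => simp
  | succ m ih =>
    rw [show 2 * (m + 1) = 2 * m + 1 + 1 by rfl, sum_range_succ, sum_range_succ,
      ih (even_two_mul m), zero_add, hg]

/-- Centered labels for the spokes of two further hubs, the first `q` edges being labeled already.
On each pair `2 i`, `2 i + 1` of rim vertices both hubs use opposite labels, so that they sum to
`0` at the hubs, and to `±2` at the rim. -/
def pairedSpokes (q : ℕ) (b : Fin 2) (j : Fin N) : ℤ :=
  if Even (b.val + j.val) then -(q + 4 * (j.val / 2 : ℕ) + 2 * b.val + 1)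
  else q + 4 * (j.val / 2 : ℕ) + 2 * b.val + 1

variable {q : ℕ}

lemma sum_pairedSpokes_hub (hN : Even N) (b : Fin 2) :
    ∑ j : Fin N, pairedSpokes q b j = 0 := by
  refine sum_fin_eq_zero_of_pairs (g := fun j ↦
    if Even (b.val + j) then -(q + 4 * (j / 2 : ℕ) + 2 * b.val + 1 : ℤ)
    else q + 4 * (j / 2 : ℕ) + 2 * b.val + 1) hN fun i ↦ ?_
  have hhalf : (2 * i + 1) / 2 = 2 * i / 2 := by omega
  simp only [Nat.even_iff, hhalf]
  split_ifs <;> omega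

lemma sum_pairedSpokes_rim (j : Fin N) :
    ∑ b, pairedSpokes q b j = if Even j.val then 2 else -2 := by
  simp only [Fin.sum_univ_two, pairedSpokes, Nat.even_iff, Fin.val_zero, Fin.val_one]
  split_ifs <;> omega

lemma pairedSpokes_injective : Function.Injective (pairedSpokes (N := N) q).uncurry := by
  rintro ⟨b, j⟩ ⟨b', j'⟩ h
  simp only [Function.uncurry, pairedSpokes, Nat.even_iff] at h
  simp only [Prod.mk.injEq, Fin.ext_iff]
  split_ifs at h <;> omega

lemma IsCentered.sumElim_pairedSpokes {ι : Type*} [Fintype ι] {y : ι → ℤ} (hy : IsCentered y)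
    (hN : Even N) (hι : Even (Fintype.card ι)) :
    IsCentered (Sum.elim y (pairedSpokes (N := N) (Fintype.card ι)).uncurry) := by
  have hcard : Fintype.card (Fin 2 × Fin N) = 2 * N := by simp
  refine hy.sumElim pairedSpokes_injective ?_ ?_ ?_ (by simp)
  all_goals
    rintro ⟨b, j⟩
    have hj := j.isLt
    rw [Nat.even_iff] at hN hι
    simp only [hcard, Function.uncurry, pairedSpokes, Int.odd_iff, Nat.cast_mul, Nat.cast_ofNat]
    split_ifs <;> grind

end PairedSpokes

section AddHubs

variable {N : ℕ} [NeZero N] {κ κ' : Type*} [Fintype κ] [Fintype κ'] {x : Fin N → ℤ}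
  {a : κ → Fin N → ℤ} {α β ρ w : ℤ}

namespace IsAlternatingLabeling

lemma comp_equiv (h : IsAlternatingLabeling x a α β ρ) (σ : κ' ≃ κ) :
    IsAlternatingLabeling x (a ∘ σ) α β ρ where
  isCentered := by
    convert h.isCentered.comp_equiv ((Equiv.refl _).sumCongr (σ.prodCongr (Equiv.refl _))) using 1
    ext (j | ⟨i, j⟩) <;> rfl
  rim_sum j := (congrArg _ (σ.sum_comp (a · j))).trans (h.rim_sum j)
  hub_sum i := h.hub_sum (σ i)

lemma sumElim_pairedSpokes (h : IsAlternatingLabeling x a α β 0) (hN : Even N) :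
    IsAlternatingLabeling x (Sum.elim a (pairedSpokes (N * (Fintype.card κ + 1))))
      (α + 2) (β - 2) 0 where
  isCentered := by
    have hcard : Fintype.card (Fin N ⊕ κ × Fin N) = N * (Fintype.card κ + 1) :=
      card_fin_sum_prod_fin
    have hcentered := h.isCentered.sumElim_pairedSpokes hN (hcard ▸ hN.mul_right _)
    convert hcentered.comp_equiv (((Equiv.refl (Fin N)).sumCongr
      (Equiv.sumProdDistrib κ (Fin 2) (Fin N))).trans (Equiv.sumAssoc _ _ _).symm) using 1
    rw [hcard]
    ext (j | ⟨i | b, j⟩) <;> rfl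
  rim_sum j := by
    have hj := h.rim_sum j
    simp only [Fintype.sum_sum_type, Sum.elim_inl, Sum.elim_inr, sum_pairedSpokes_rim]
    split_ifs at hj ⊢ <;> linarith
  hub_sum := by
    rintro (i | b)
    · exact h.hub_sum i
    · exact sum_pairedSpokes_hub hN b

lemma exists_add_two_mul {k : ℕ} {a : Fin k → Fin N → ℤ} (h : IsAlternatingLabeling x a α β 0)
    (hN : Even N) (r : ℕ) :
    ∃ a' : Fin (k + 2 * r) → Fin N → ℤ,
      IsAlternatingLabeling x a' (α + 2 * r) (β - 2 * r) 0 := by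
  induction r with
  | zero => exact ⟨a, by simpa using h⟩
  | succ r ih =>
    obtain ⟨a', ha'⟩ := ih
    have hα : α + 2 * (r + 1 : ℕ) = α + 2 * r + 2 := by push_cast; ring
    have hβ : β - 2 * (r + 1 : ℕ) = β - 2 * r - 2 := by push_cast; ring
    rw [hα, hβ]
    exact ⟨_, (ha'.sumElim_pairedSpokes hN).comp_equiv finSumFinEquiv.symm⟩

theorem chiLA_add_two_mul_eq_three {k : ℕ} [NeZero k] {a : Fin k → Fin N → ℤ}
    (h : IsAlternatingLabeling x a w (-w) 0) (hN : 3 ≤ N) (heven : Even N) (hpos : 0 < w)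
    (hle : w ≤ N * (k + 1)) (r : ℕ) : chiLA (cycleJoinNull N (Fin (k + 2 * r))) = 3 := by
  obtain ⟨a', ha'⟩ := h.exists_add_two_mul heven r
  have hw : w + 2 * r ≤ N * (Fintype.card (Fin (k + 2 * r)) + 1) := by
    rw [Fintype.card_fin]
    push_cast
    nlinarith
  have : Nonempty (Fin (k + 2 * r)) := ⟨⟨0, by have := NeZero.pos k; omega⟩⟩
  rw [← neg_add'] at ha'
  exact ha'.chiLA_eq_three_of_balanced hN heven (by positivity) hw

end IsAlternatingLabeling

end AddHubs

section Wheel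

variable {N : ℕ} [NeZero N] {x : Fin N → ℤ} {w : ℤ}

/-- The spokes that complete the rim labels `x` of the wheel `C_N ∨ O_1` to alternating sums `w`
and `-w` around the rim. -/
def wheelSpoke (w : ℤ) (x : Fin N → ℤ) (j : Fin N) : ℤ :=
  (if Even j.val then w else -w) - x (j - 1) - x j

lemma sum_wheelSpoke (hN : Even N) : ∑ j, wheelSpoke w x j = -2 * ∑ j, x j := by
  have halternate : ∑ j : Fin N, (if Even j.val then w else -w) = 0 :=
    sum_fin_eq_zero_of_pairs (g := fun j ↦ if Even j then w else -w) hN fun i ↦ by simp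
  have hshift : ∑ j, x (j - 1) = ∑ j, x j := (Equiv.subRight 1).sum_comp x
  simp only [wheelSpoke, sum_sub_distrib, halternate, hshift]
  ring

lemma IsAlternatingLabeling.of_isCentered_wheelSpoke (hN : Even N)
    (hx : IsCentered (Sum.elim x (Function.uncurry fun _ : Fin 1 ↦ wheelSpoke w x))) :
    IsAlternatingLabeling x (fun _ : Fin 1 ↦ wheelSpoke w x) w (-w) 0 where
  isCentered := hx
  rim_sum j := by
    simp only [univ_unique, sum_singleton, wheelSpoke]
    ring
  hub_sum _ := by
    have htotal : ∑ j, x j + ∑ j, wheelSpoke w x j = 0 := by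
      have hsum := hx.sum_eq_zero
      rw [Fintype.sum_sum_type, Fintype.sum_prod_type] at hsum
      simpa using hsum
    rw [sum_wheelSpoke hN] at htotal ⊢
    linarith

lemma isCentered_wheelSpoke (hw : Odd w) (hodd : ∀ j, Odd (x j)) (hx : Function.Injective x)
    (hspoke : Function.Injective (wheelSpoke w x)) (hne : ∀ j j', x j ≠ wheelSpoke w x j')
    (hxlt : ∀ j, |x j| < 2 * N) (hlt : ∀ j, |wheelSpoke w x j| < 2 * N) :
    IsCentered (Sum.elim x (Function.uncurry fun _ : Fin 1 ↦ wheelSpoke w x)) := by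
  have hcard : Fintype.card (Fin N ⊕ Fin 1 × Fin N) = 2 * N := by
    rw [card_fin_sum_prod_fin, Fintype.card_fin, mul_comm]
  have hspokeOdd (j : Fin N) : Odd (wheelSpoke w x j) := by
    have hsign : Odd (if Even j.val then w else -w) := by
      split_ifs
      exacts [hw, hw.neg]
    exact (hsign.sub_odd (hodd _)).sub_odd (hodd j)
  refine ⟨hx.sumElim (hspoke.comp (Equiv.uniqueProd _ _).injective) fun j e ↦ hne j e.2, ?_, ?_⟩ <;>
    rw [hcard, Nat.cast_mul, Nat.cast_ofNat] <;> rintro (j | ⟨_, j⟩)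
  · exact (hodd j).add_even (even_two_mul _)
  · exact (hspokeOdd j).add_even (even_two_mul _)
  · exact hxlt j
  · exact hlt j

end Wheel

section OddWheel

variable {m : ℕ}

/-- Centered labels for the rim of the wheel `C_{2m} ∨ O_1` with `m` odd. They are the labels of
absolute value greater than `2 m`. -/
def oddWheelRim (m : ℕ) (j : Fin (2 * m)) : ℤ :=
  if Even j.val then j.val + 1 - 4 * m
  else if j.val < m then j.val + 3 * m + 1
  else j.val + m + 1

lemma oddWheelRim_injective : Function.Injective (oddWheelRim m) := by
  intro j j' h
  simp only [oddWheelRim, Nat.even_iff] at h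
  ext
  split_ifs at h <;> omega

lemma odd_oddWheelRim (hm : Odd m) (j : Fin (2 * m)) : Odd (oddWheelRim m j) := by
  rw [Nat.odd_iff] at hm
  simp only [oddWheelRim, Nat.even_iff, Int.odd_iff]
  split_ifs <;> omega

lemma lt_abs_oddWheelRim (j : Fin (2 * m)) : 2 * m < |oddWheelRim m j| := by
  simp only [oddWheelRim, Nat.even_iff, lt_abs]
  split_ifs <;> omega

lemma abs_oddWheelRim_lt (hm : Odd m) (j : Fin (2 * m)) :
    |oddWheelRim m j| < 2 * (2 * m : ℕ) := by
  rw [Nat.odd_iff] at hm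
  simp only [oddWheelRim, Nat.even_iff, abs_lt]
  split_ifs <;> omega

variable [NeZero m]

lemma wheelSpoke_oddWheelRim (hm : Odd m) (j : Fin (2 * m)) :
    wheelSpoke m (oddWheelRim m) j =
      (if j.val = 0 then 2 * m - 1
      else if Even j.val then
        if j.val < m then 2 * m - 1 - 2 * j.val else 4 * m - 1 - 2 * j.val
      else if j.val < m then -1 - 2 * j.val else 2 * m - 1 - 2 * j.val : ℤ) := by
  have hm0 := NeZero.ne m
  simp only [wheelSpoke, oddWheelRim, fin_val_sub_one, Nat.even_iff]
  rw [Nat.odd_iff] at hm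
  grind

lemma wheelSpoke_oddWheelRim_injective (hm : Odd m) :
    Function.Injective (wheelSpoke m (oddWheelRim m)) := by
  intro j j' h
  simp only [wheelSpoke_oddWheelRim hm, Nat.even_iff] at h
  rw [Nat.odd_iff] at hm
  ext
  split_ifs at h <;> omega

lemma abs_wheelSpoke_oddWheelRim_lt (hm : Odd m) (j : Fin (2 * m)) :
    |wheelSpoke m (oddWheelRim m) j| < 2 * m := by
  simp only [wheelSpoke_oddWheelRim hm, Nat.even_iff, abs_lt]
  rw [Nat.odd_iff] at hm
  split_ifs <;> omega

lemma isCentered_wheelSpoke_oddWheelRim (hm : Odd m) :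
    IsCentered (Sum.elim (oddWheelRim m)
      (Function.uncurry fun _ : Fin 1 ↦ wheelSpoke m (oddWheelRim m))) := by
  have hlt := abs_wheelSpoke_oddWheelRim_lt hm
  refine isCentered_wheelSpoke (by exact_mod_cast hm) (odd_oddWheelRim hm) oddWheelRim_injective
    (wheelSpoke_oddWheelRim_injective hm) (fun j j' h ↦ ?_) (abs_oddWheelRim_lt hm) fun j ↦ ?_
  · exact (lt_abs_oddWheelRim j).not_gt (h ▸ hlt j')
  · exact (hlt j).trans (by have := NeZero.pos m; push_cast; linarith)

end OddWheel

section EvenWheel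

variable {m : ℕ}

/-- Centered labels for the rim of the wheel `C_{2m} ∨ O_1` with `m ≥ 4` even. They are the labels
of absolute value greater than `2 m + 1`, together with `±(2 m - 1)`. -/
def evenWheelRim (m : ℕ) (j : Fin (2 * m)) : ℤ :=
  if Even j.val then
    if j.val + 2 < m then 2 * j.val + 1 - 4 * m
    else if j.val + 2 = m then 1 - 2 * m
    else if j.val = m then -2 * m - 3
    else -2 * j.val - 1
  else if j.val + 2 < m then 2 * m + 3 + 2 * j.val
  else 6 * m - 3 - 2 * j.val

lemma odd_evenWheelRim (j : Fin (2 * m)) : Odd (evenWheelRim m j) := by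
  simp only [evenWheelRim, Int.odd_iff]
  split_ifs <;> omega

lemma evenWheelRim_injective (hm : Even m) : Function.Injective (evenWheelRim m) := by
  intro j j' h
  rw [Nat.even_iff] at hm
  simp only [evenWheelRim, Nat.even_iff] at h
  ext
  split_ifs at h <;> omega

lemma abs_evenWheelRim (hm : Even m) (j : Fin (2 * m)) :
    2 * m + 1 < |evenWheelRim m j| ∨ |evenWheelRim m j| = 2 * m - 1 := by
  rw [Nat.even_iff] at hm
  simp only [evenWheelRim, Nat.even_iff]
  split_ifs <;> grind

lemma abs_evenWheelRim_lt (hm : Even m) (j : Fin (2 * m)) :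
    |evenWheelRim m j| < 2 * (2 * m : ℕ) := by
  rw [Nat.even_iff] at hm
  simp only [evenWheelRim, Nat.even_iff, abs_lt]
  split_ifs <;> omega

variable [NeZero m]

lemma wheelSpoke_evenWheelRim (hm : Even m) (h4 : 4 ≤ m) (j : Fin (2 * m)) :
    wheelSpoke 1 (evenWheelRim m) j =
      (if Even j.val then
        if j.val = 0 then 2 * m + 1
        else if j.val + 2 < m then 2 * m - 1 - 4 * j.val
        else if j.val + 2 = m then 3 - 2 * m
        else if j.val = m then 5 - 2 * m
        else 4 * j.val + 3 - 6 * m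
      else
        if j.val + 2 < m then 2 * m - 3 - 4 * j.val
        else if j.val + 1 = m then -2 * m - 1
        else if j.val = m + 1 then 7 - 2 * m
        else 4 * j.val + 1 - 6 * m : ℤ) := by
  simp only [wheelSpoke, evenWheelRim, fin_val_sub_one, Nat.even_iff]
  rw [Nat.even_iff] at hm
  grind

lemma wheelSpoke_evenWheelRim_injective (hm : Even m) (h4 : 4 ≤ m) :
    Function.Injective (wheelSpoke 1 (evenWheelRim m)) := by
  intro j j' h
  simp only [wheelSpoke_evenWheelRim hm h4, Nat.even_iff] at h
  rw [Nat.even_iff] at hm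
  ext
  split_ifs at h <;> omega

lemma abs_wheelSpoke_evenWheelRim (hm : Even m) (h4 : 4 ≤ m) (j : Fin (2 * m)) :
    |wheelSpoke 1 (evenWheelRim m) j| < 2 * m - 1 ∨
      |wheelSpoke 1 (evenWheelRim m) j| = 2 * m + 1 := by
  have hj := j.isLt
  simp only [wheelSpoke_evenWheelRim hm h4, Nat.even_iff]
  rw [Nat.even_iff] at hm
  split_ifs <;> grind

lemma isCentered_wheelSpoke_evenWheelRim (hm : Even m) (h4 : 4 ≤ m) :
    IsCentered (Sum.elim (evenWheelRim m)
      (Function.uncurry fun _ : Fin 1 ↦ wheelSpoke 1 (evenWheelRim m))) := by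
  have hspoke := abs_wheelSpoke_evenWheelRim hm h4
  refine isCentered_wheelSpoke odd_one odd_evenWheelRim (evenWheelRim_injective hm)
    (wheelSpoke_evenWheelRim_injective hm h4) (fun j j' h ↦ ?_) (abs_evenWheelRim_lt hm) fun j ↦ ?_
  · have hrim := abs_evenWheelRim hm j
    have hj' := hspoke j'
    rw [h] at hrim
    omega
  · have hj := hspoke j
    push_cast
    omega

end EvenWheel

section SquareRim

lemma isAlternatingLabeling_square_one :
    IsAlternatingLabeling (N := 4) ![-5, -1, -3, 5] ![![3, 1, 7, -7]] 3 (-5) 4 where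
  isCentered := ⟨by decide, by decide, by decide⟩
  rim_sum := by decide
  hub_sum := by decide

lemma isAlternatingLabeling_square_three :
    IsAlternatingLabeling (N := 4) ![-1, -13, 1, 13]
      ![![-7, 15, 7, -15], ![-5, 5, 11, -11], ![3, -9, -3, 9]] 3 (-3) 0 where
  isCentered := ⟨by decide, by decide, by decide⟩
  rim_sum := by decide
  hub_sum := by decide

theorem chiLA_cycleJoinNull_four_one : chiLA (cycleJoinNull 4 (Fin 1)) = 3 := by
  have h := isAlternatingLabeling_square_one
  have heven : Even 4 := by decide
  exact h.chiLA_eq_three (by norm_num)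
    (h.isLocalAntimagic (by norm_num) heven (by norm_num) (by norm_num) (by norm_num))

theorem chiLA_cycleJoinNull_four_add_three (r : ℕ) :
    chiLA (cycleJoinNull 4 (Fin (3 + 2 * r))) = 3 :=
  isAlternatingLabeling_square_three.chiLA_add_two_mul_eq_three (by norm_num) (by decide)
    (by norm_num) (by norm_num) r

end SquareRim

theorem chiLA_cycleJoinNull_of_three_le {m : ℕ} (hm : 3 ≤ m) (r : ℕ) :
    chiLA (cycleJoinNull (2 * m) (Fin (1 + 2 * r))) = 3 := by
  have : NeZero m := ⟨by omega⟩
  have heven := even_two_mul m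
  rcases m.even_or_odd with hpar | hpar
  · have hrim := isCentered_wheelSpoke_evenWheelRim hpar (by grind)
    exact (IsAlternatingLabeling.of_isCentered_wheelSpoke heven hrim).chiLA_add_two_mul_eq_three
      (by omega) heven one_pos (by push_cast; omega) r
  · have hrim := isCentered_wheelSpoke_oddWheelRim hpar
    exact (IsAlternatingLabeling.of_isCentered_wheelSpoke heven hrim).chiLA_add_two_mul_eq_three
      (by omega) heven (by omega) (by push_cast; omega) r

/-- Theorem: For all integers `m ≥ 2` and `n ≥ 1`, `χ_la(C_{2m} ∨ O_{2n−1}) = 3`. -/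
theorem chiLA_evenCycle_join_null_odd (m n : ℕ) (hm : 2 ≤ m) (hn : 1 ≤ n) :
    chiLA (joinG (cycleGraph (2 * m)) (⊥ : SimpleGraph (Fin (2 * n - 1)))) = 3 := by
  obtain ⟨r, rfl⟩ := Nat.exists_eq_add_of_le hn
  rw [show 2 * (1 + r) - 1 = 1 + 2 * r by omega]
  rcases hm.eq_or_lt with rfl | hm
  · rcases r with _ | r
    · exact chiLA_cycleJoinNull_four_one
    · rw [show 1 + 2 * (r + 1) = 3 + 2 * r by ring]
      exact chiLA_cycleJoinNull_four_add_three r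
  · exact chiLA_cycleJoinNull_of_three_le hm r
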